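/- Let N ≥ 4. Then (a) every element of S₀¹ is mapped by π_D to an element ∼-equivalent to an element of S₀², and the induced map from S₀¹ to the set of ∼-equivalence classes of elements of S₀² is a bijection; (b) for all (k,x), (l,y) ∈ S₀¹, writing (k',x') = π_D(k,x) and (l',y') = π_D(l,y), the multiplicity of y/x as a root of d^{D(1)}_{k,l}(z) equals the multiplicity of y'/x' as a root of d^{D(2)}_{k',l'}(z). -/

import Mathlib

/-!
Every scalar occurring in the statement, up to a power of `ι`, has the form `(-1) ^ m * q ^ a`.
Since `q` is transcendental, such a scalar determines the exponent `a` and the parity of `m`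
(`sign_mul_zpow_inj`), so each equality of scalars becomes a linear condition on exponents together
with a parity condition.

For the bijection, `ι ^ (N - i)` is `±ι` or `±1` according to the parity of `N - i`. On nodes
`i ≤ N - 2` the sign is absorbed by `∼`; on the spin nodes `N - 1`, `N`, which `π_D` merges, the
sign `(-1) ^ i` remembers which of the two nodes one started from.

For the multiplicities, the root multiplicity of a product is the sum of those of its factors, and
each factor has only simple nonzero roots (`rootMultiplicity_X_sq_sub_C` in the quadratic case), so
both multiplicities count the indices `s` whose factor vanishes. If at least one of the nodes is
not spin, the two products have the same index set and their factors vanish simultaneously: the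
square of the ratio of spectral parameters is a sign times `q ^ (2 * c)`, and that sign agrees with
the one in `(-q²) ^ m` exactly when `c = m`. If both nodes are spin, the sign `(-1) ^ (l - k)`
selects the even indices `s` of the twisted denominator when `k ≠ l` and the odd ones when `k = l`;
these match the untwisted indices through `s ↦ 2 * s` and `s ↦ 2 * s - 1`.
-/

open Polynomial

noncomputable section

variable {𝕜 : Type*} [Field 𝕜]

/-- The denominator `d^{D(1)}_{k,l}(z)` between fundamental modules of `U_q'(D_N^{(1)})`. -/
def dD1 (q : 𝕜) (N k l : ℤ) : Polynomial 𝕜 :=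
  if k ≤ N - 2 ∧ l ≤ N - 2 then
    ∏ s ∈ Finset.Icc (1 : ℤ) (min k l),
      (X - C ((-q) ^ (|k - l| + 2 * s))) * (X - C ((-q) ^ (2 * N - 2 - k - l + 2 * s)))
  else if k ≤ N - 2 ∨ l ≤ N - 2 then
    ∏ s ∈ Finset.Icc (1 : ℤ) (min k l), (X - C ((-q) ^ (N - min k l - 1 + 2 * s)))
  else if k ≠ l then
    ∏ s ∈ Finset.Icc (1 : ℤ) ((N - 1) / 2), (X - C ((-q) ^ (4 * s)))
  else
    ∏ s ∈ Finset.Icc (1 : ℤ) (N / 2), (X - C ((-q) ^ (4 * s - 2)))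

/-- The denominator `d^{D(2)}_{k,l}(z)` between fundamental modules of `U_q'(D_N^{(2)})`. -/
def dD2 (q : 𝕜) (N k l : ℤ) : Polynomial 𝕜 :=
  if k ≤ N - 2 ∧ l ≤ N - 2 then
    ∏ s ∈ Finset.Icc (1 : ℤ) (min k l),
      (X ^ 2 - C ((-q ^ 2) ^ (|k - l| + 2 * s))) *
        (X ^ 2 - C ((-q ^ 2) ^ (2 * N - 2 - k - l + 2 * s)))
  else if k ≤ N - 2 ∨ l ≤ N - 2 then
    ∏ s ∈ Finset.Icc (1 : ℤ) (min k l), (X ^ 2 + C ((-q ^ 2) ^ (N - 1 - min k l + 2 * s)))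
  else
    ∏ s ∈ Finset.Icc (1 : ℤ) (N - 1), (X + C ((-q ^ 2) ^ s))

/-- The 2:1 map `π_{D_N^{(1)}}`, for a fixed `ι` with `ι² = −1`. -/
def piD (ι : 𝕜) (N : ℤ) (p : ℤ × 𝕜) : ℤ × 𝕜 :=
  if p.1 ≤ N - 2 then (p.1, ι ^ (N - p.1) * p.2) else (N - 1, (-1 : 𝕜) ^ p.1 * p.2)

/-- The equivalence relation `∼` on `{1,…,N−1} × 𝕜ˣ` parametrizing the evaluation
fundamental modules of `U_q'(D_N^{(2)})`. -/
def simD (N : ℤ) (p q : ℤ × 𝕜) : Prop :=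
  p.1 = q.1 ∧ (p.2 = q.2 ∨ (p.1 ≤ N - 2 ∧ p.2 = -q.2))

/-- The connected component `S₀(D_N^{(1)})
= {(i,(−q)^p) : 1 ≤ i ≤ N−1, p ≡ N−1−i (mod 2)} ∪ {(N,(−q)^p) : p even}`. -/
def S01D (q : 𝕜) (N : ℤ) : Set (ℤ × 𝕜) :=
  {v | ∃ i p : ℤ, 1 ≤ i ∧ i ≤ N - 1 ∧ p % 2 = (N - 1 - i) % 2 ∧ v = (i, (-q) ^ p)} ∪
  {v | ∃ p : ℤ, p % 2 = 0 ∧ v = (N, (-q) ^ p)}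

/-- The connected component `S₀(D_N^{(2)})
= {(i, ι q^p) : 1 ≤ i ≤ N−2, p ≡ N−1−i ≡ 0 (mod 2)}
∪ {(i, q^p) : 1 ≤ i ≤ N−2, p ≡ N−1−i ≡ 1 (mod 2)} ∪ {(N−1, ±q^p) : p even}`. -/
def S02D (q ι : 𝕜) (N : ℤ) : Set (ℤ × 𝕜) :=
  {v | ∃ i p : ℤ, 1 ≤ i ∧ i ≤ N - 2 ∧ p % 2 = 0 ∧ (N - 1 - i) % 2 = 0 ∧ v = (i, ι * q ^ p)} ∪
  {v | ∃ i p : ℤ, 1 ≤ i ∧ i ≤ N - 2 ∧ p % 2 = 1 ∧ (N - 1 - i) % 2 = 1 ∧ v = (i, q ^ p)} ∪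
  {v | ∃ (p : ℤ) (ε : 𝕜), (ε = 1 ∨ ε = -1) ∧ p % 2 = 0 ∧ v = (N - 1, ε * q ^ p)}

/-! ### Signed powers of `q` and powers of `ι` -/

section Scalars

lemma ne_zero_of_transcendental [CharZero 𝕜] {q : 𝕜} (hq : Transcendental ℚ q) : q ≠ 0 :=
  fun h => hq (h ▸ isAlgebraic_zero)

lemma zpow_inj_of_transcendental [CharZero 𝕜] {q : 𝕜} (hq : Transcendental ℚ q) {a b : ℤ} :
    q ^ a = q ^ b ↔ a = b := by
  have hq0 : q ≠ 0 := ne_zero_of_transcendental hq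
  have key : ∀ n : ℕ, n ≠ 0 → q ^ n ≠ 1 := fun n hn h =>
    (hq.pow (Nat.pos_of_ne_zero hn)) (by rw [h]; exact isAlgebraic_one)
  refine ⟨fun h => ?_, fun h => by rw [h]⟩
  have h1 : q ^ (a - b) = 1 := by
    rw [zpow_sub₀ hq0, h, div_self (zpow_ne_zero _ hq0)]
  have h2 : q ^ (a - b).natAbs = 1 := by
    rcases Int.natAbs_eq (a - b) with e | e
    · rw [← zpow_natCast, ← e, h1]
    · rw [← zpow_natCast, ← inv_inj, ← zpow_neg, ← e, h1, inv_one]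
  by_contra hne
  exact key _ (by omega) h2

lemma neg_one_zpow_inj [CharZero 𝕜] {m n : ℤ} :
    (-1 : 𝕜) ^ m = (-1) ^ n ↔ m % 2 = n % 2 := by
  have h1 : (1 : 𝕜) ≠ -1 := fun h => by
    have : (2 : 𝕜) = 0 := by linear_combination h
    exact two_ne_zero this
  rcases Int.even_or_odd m with hm | hm <;> rcases Int.even_or_odd n with hn | hn <;>
    rw [hm.neg_one_zpow, hn.neg_one_zpow] <;>
    simp only [Int.even_iff, Int.odd_iff] at hm hn <;> simp [hm, hn, h1, h1.symm]

/-- Squaring removes the sign, so `a` is determined by transcendence, and the parity follows. -/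
lemma sign_mul_zpow_inj [CharZero 𝕜] {q : 𝕜} (hq : Transcendental ℚ q) {m n a b : ℤ} :
    (-1 : 𝕜) ^ m * q ^ a = (-1) ^ n * q ^ b ↔ a = b ∧ m % 2 = n % 2 := by
  have hq0 : q ≠ 0 := ne_zero_of_transcendental hq
  have sq_one : ∀ m : ℤ, ((-1 : 𝕜) ^ m) ^ 2 = 1 := fun m => by
    rcases Int.even_or_odd m with hm | hm <;> simp [hm.neg_one_zpow]
  constructor
  · intro h
    have h2 : q ^ (a * 2) = q ^ (b * 2) := by
      have := congrArg (· ^ 2) h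
      simp only [mul_pow, sq_one, one_mul] at this
      rw [zpow_mul, zpow_mul]
      exact_mod_cast this
    have hab : a = b := by
      have := (zpow_inj_of_transcendental hq).1 h2
      omega
    subst hab
    exact ⟨rfl, neg_one_zpow_inj.1 (mul_right_cancel₀ (zpow_ne_zero _ hq0) h)⟩
  · rintro ⟨rfl, h⟩
    rw [neg_one_zpow_inj.2 h]

lemma neg_zpow_eq (q : 𝕜) (a : ℤ) : (-q) ^ a = (-1) ^ a * q ^ a := by
  rw [neg_eq_neg_one_mul, mul_zpow]

lemma neg_sq_zpow_eq (q : 𝕜) (a : ℤ) : (-q ^ 2) ^ a = (-1) ^ a * q ^ (2 * a) := by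
  rw [neg_zpow_eq, zpow_mul]
  norm_cast

lemma iota_zpow_sq {ι : 𝕜} (hι : ι ^ 2 = -1) (a : ℤ) : (ι ^ a) ^ 2 = (-1) ^ a := by
  rw [← hι, ← zpow_natCast, ← zpow_natCast, ← zpow_mul, ← zpow_mul, mul_comm]

lemma iota_ne_zero {ι : 𝕜} (hι : ι ^ 2 = -1) : ι ≠ 0 := by
  rintro rfl
  simp at hι

end Scalars

/-! ### Root multiplicities of the denominators -/

section Multiplicities

lemma rootMultiplicity_finset_prod {α : Type*} (s : Finset α) (f : α → 𝕜[X])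
    (hf : ∀ i ∈ s, f i ≠ 0) (a : 𝕜) :
    rootMultiplicity a (∏ i ∈ s, f i) = ∑ i ∈ s, rootMultiplicity a (f i) := by
  classical
  induction s using Finset.induction_on with
  | empty => simp
  | insert i s hi ih =>
    have h0 : ∏ i ∈ s, f i ≠ 0 :=
      Finset.prod_ne_zero_iff.2 fun j hj => hf j (Finset.mem_insert_of_mem hj)
    rw [Finset.prod_insert hi, Finset.sum_insert hi, rootMultiplicity_mul
      (mul_ne_zero (hf i (Finset.mem_insert_self _ _)) h0),
      ih fun j hj => hf j (Finset.mem_insert_of_mem hj)]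

lemma X_sq_sub_C_ne_zero (b : 𝕜) : (X ^ 2 - C b : 𝕜[X]) ≠ 0 :=
  X_pow_sub_C_ne_zero two_pos b

open Classical in
/-- The condition `a ≠ 0` makes the roots `a`, `-a` of `X² - a²` distinct. -/
lemma rootMultiplicity_X_sq_sub_C [CharZero 𝕜] {a : 𝕜} (ha : a ≠ 0) (b : 𝕜) :
    rootMultiplicity a (X ^ 2 - C b) = if a ^ 2 = b then 1 else 0 := by
  split_ifs with h
  · subst h
    have hf : (X ^ 2 - C (a ^ 2) : 𝕜[X]) = (X - C a) * (X - C (-a)) := by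
      simp only [C_pow, C_neg]; ring
    have hne : a ≠ -a := fun h => by
      have : 2 * a = 0 := by linear_combination h
      simp [ha] at this
    rw [hf, rootMultiplicity_mul (mul_ne_zero (X_sub_C_ne_zero _) (X_sub_C_ne_zero _)),
      rootMultiplicity_X_sub_C, rootMultiplicity_X_sub_C, if_pos rfl, if_neg hne]
  · apply rootMultiplicity_eq_zero
    simpa [IsRoot, sub_eq_zero] using h

open Classical in
lemma rootMultiplicity_X_sq_add_C [CharZero 𝕜] {a : 𝕜} (ha : a ≠ 0) (b : 𝕜) :
    rootMultiplicity a (X ^ 2 + C b) = if a ^ 2 = -b then 1 else 0 := by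
  rw [← rootMultiplicity_X_sq_sub_C ha, C_neg, sub_neg_eq_add]

open Classical in
lemma rootMultiplicity_X_add_C (a b : 𝕜) :
    rootMultiplicity a (X + C b) = if a = -b then 1 else 0 := by
  rw [← rootMultiplicity_X_sub_C, C_neg, sub_neg_eq_add]

/-- Two non-spin nodes. The spectral parameter on the twisted side
enters only through its square, which is what `hz` records. -/
lemma mult_nonspin [CharZero 𝕜] {q : 𝕜} (hq : Transcendental ℚ q) {N k l c : ℤ}
    (hk : k ≤ N - 2) (hl : l ≤ N - 2) {z : 𝕜} (hz0 : z ≠ 0)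
    (hz : z ^ 2 = (-1) ^ (k - l) * q ^ (2 * c)) :
    rootMultiplicity ((-q) ^ c) (dD1 q N k l) = rootMultiplicity z (dD2 q N k l) := by
  classical
  rw [dD1, dD2, if_pos ⟨hk, hl⟩, if_pos ⟨hk, hl⟩,
    rootMultiplicity_finset_prod _ _ fun s _ =>
      mul_ne_zero (X_sub_C_ne_zero _) (X_sub_C_ne_zero _),
    rootMultiplicity_finset_prod _ _ fun s _ =>
      mul_ne_zero (X_sq_sub_C_ne_zero _) (X_sq_sub_C_ne_zero _)]
  refine Finset.sum_congr rfl fun s _ => ?_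
  have key : ∀ m : ℤ, m % 2 = (k - l) % 2 →
      rootMultiplicity ((-q) ^ c) (X - C ((-q) ^ m)) =
        rootMultiplicity z (X ^ 2 - C ((-q ^ 2) ^ m)) := fun m hm => by
    rw [rootMultiplicity_X_sub_C, rootMultiplicity_X_sq_sub_C hz0, hz, neg_sq_zpow_eq,
      neg_zpow_eq q, neg_zpow_eq q]
    simp only [sign_mul_zpow_inj hq]
    congr 1
    apply propext
    omega
  rw [rootMultiplicity_mul (mul_ne_zero (X_sub_C_ne_zero _) (X_sub_C_ne_zero _)),
    rootMultiplicity_mul (mul_ne_zero (X_sq_sub_C_ne_zero _) (X_sq_sub_C_ne_zero _)),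
    key _ (by rcases abs_cases (k - l) with h | h <;> omega), key _ (by omega)]

/-- One spin and one non-spin node. Here `m` is the index of the non-spin node, and `k'`, `l'`
stand for the images of `k`, `l` on the twisted side. -/
lemma mult_mixed [CharZero 𝕜] {q : 𝕜} (hq : Transcendental ℚ q) {N k l k' l' m c : ℤ}
    (hkl : ¬(k ≤ N - 2 ∧ l ≤ N - 2)) (hkl1 : k ≤ N - 2 ∨ l ≤ N - 2)
    (hkl' : ¬(k' ≤ N - 2 ∧ l' ≤ N - 2)) (hkl1' : k' ≤ N - 2 ∨ l' ≤ N - 2)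
    (hm : min k l = m) (hm' : min k' l' = m) {z : 𝕜} (hz0 : z ≠ 0)
    (hz : z ^ 2 = (-1) ^ (N - m) * q ^ (2 * c)) :
    rootMultiplicity ((-q) ^ c) (dD1 q N k l) = rootMultiplicity z (dD2 q N k' l') := by
  classical
  rw [dD1, dD2, if_neg hkl, if_neg hkl', if_pos hkl1, if_pos hkl1', hm, hm',
    rootMultiplicity_finset_prod _ _ fun s _ => X_sub_C_ne_zero _,
    rootMultiplicity_finset_prod _ _ fun s _ => by
      rw [← sub_neg_eq_add, ← C_neg]; exact X_sq_sub_C_ne_zero _]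
  refine Finset.sum_congr rfl fun s _ => ?_
  have hneg : -(-q ^ 2) ^ (N - 1 - m + 2 * s) =
      (-1) ^ (N - m + 2 * s) * q ^ (2 * (N - 1 - m + 2 * s)) := by
    rw [neg_sq_zpow_eq, show N - m + 2 * s = 1 + (N - 1 - m + 2 * s) by ring,
      zpow_add₀ (by norm_num : (-1 : 𝕜) ≠ 0) 1]
    simp
  rw [rootMultiplicity_X_sub_C, rootMultiplicity_X_sq_add_C hz0, hz, hneg,
    neg_zpow_eq q, neg_zpow_eq q]
  simp only [sign_mul_zpow_inj hq]
  congr 1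
  apply propext
  omega

/-- Two spin nodes. The factor `s` of the twisted denominator vanishes at `z` iff `c = 2 * s`
and `s` has the parity of `l - k + 1`. -/
lemma mult_spin [CharZero 𝕜] {q : 𝕜} (hq : Transcendental ℚ q) {N k l c : ℤ}
    (hk : k = N - 1 ∨ k = N) (hl : l = N - 1 ∨ l = N) (hc : c % 2 = 0) {z : 𝕜}
    (hz : z = (-1) ^ (l - k) * q ^ c) :
    rootMultiplicity ((-q) ^ c) (dD1 q N k l) =
      rootMultiplicity z (dD2 q N (N - 1) (N - 1)) := by
  classical
  have hne : ∀ b : 𝕜, (X + C b : 𝕜[X]) ≠ 0 := X_add_C_ne_zero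
  have hneg : ∀ s : ℤ, -(-q ^ 2) ^ s = (-1) ^ (1 + s) * q ^ (2 * s) := fun s => by
    rw [neg_sq_zpow_eq, zpow_add₀ (by norm_num : (-1 : 𝕜) ≠ 0) 1]
    simp
  rw [dD1, dD2, if_neg (by omega : ¬(k ≤ N - 2 ∧ l ≤ N - 2)),
    if_neg (by omega : ¬(k ≤ N - 2 ∨ l ≤ N - 2)),
    if_neg (by omega : ¬(N - 1 ≤ N - 2 ∧ N - 1 ≤ N - 2)),
    if_neg (by omega : ¬(N - 1 ≤ N - 2 ∨ N - 1 ≤ N - 2)),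
    rootMultiplicity_finset_prod _ _ fun s _ => hne _]
  simp only [rootMultiplicity_X_add_C, hneg, hz, sign_mul_zpow_inj hq]
  rw [← Finset.card_filter]
  split_ifs with h
  · rw [rootMultiplicity_finset_prod _ _ fun s _ => X_sub_C_ne_zero _]
    simp only [rootMultiplicity_X_sub_C, neg_zpow_eq q, sign_mul_zpow_inj hq]
    rw [← Finset.card_filter]
    refine Finset.card_nbij' (fun s => 2 * s) (fun s => s / 2) ?_ ?_ ?_ ?_ <;>
    · intro s hs
      simp only [Finset.coe_filter, Finset.mem_Icc, Set.mem_ofPred_eq] at hs ⊢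
      omega
  · rw [rootMultiplicity_finset_prod _ _ fun s _ => X_sub_C_ne_zero _]
    simp only [rootMultiplicity_X_sub_C, neg_zpow_eq q, sign_mul_zpow_inj hq]
    rw [← Finset.card_filter]
    refine Finset.card_nbij' (fun s => 2 * s - 1) (fun s => (s + 1) / 2) ?_ ?_ ?_ ?_ <;>
    · intro s hs
      simp only [Finset.coe_filter, Finset.mem_Icc, Set.mem_ofPred_eq] at hs ⊢
      omega

end Multiplicities

/-! ### The component `S₀(D_N^{(1)})` and the map `π_D` -/

section Component

/-- A uniform description of `S₀(D_N^{(1)})`, in which the parity condition is imposed separately on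
the spin and the non-spin nodes. -/
lemma mem_S01D {q : 𝕜} {N : ℤ} (hN : 4 ≤ N) {v : ℤ × 𝕜} :
    v ∈ S01D q N ↔ ∃ i p : ℤ, v = (i, (-q) ^ p) ∧
      ((1 ≤ i ∧ i ≤ N - 2 ∧ p % 2 = (N - 1 - i) % 2) ∨ ((i = N - 1 ∨ i = N) ∧ p % 2 = 0)) := by
  constructor
  · rintro (⟨i, p, h1, h2, h3, rfl⟩ | ⟨p, hp, rfl⟩)
    · exact ⟨i, p, rfl, by omega⟩
    · exact ⟨N, p, rfl, by omega⟩
  · rintro ⟨i, p, rfl, h⟩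
    by_cases hi : i = N
    · subst hi
      exact Or.inr ⟨p, by omega, rfl⟩
    · exact Or.inl ⟨i, p, by omega, by omega, by omega, rfl⟩

lemma piD_nonspin {ι : 𝕜} {N i : ℤ} (hi : i ≤ N - 2) (x : 𝕜) :
    piD ι N (i, x) = (i, ι ^ (N - i) * x) := if_pos hi

lemma piD_spin {ι : 𝕜} {N i : ℤ} (hi : i = N - 1 ∨ i = N) (x : 𝕜) :
    piD ι N (i, x) = (N - 1, (-1) ^ i * x) := if_neg (by dsimp only; omega)

lemma iota_zpow_even {ι : 𝕜} (hι : ι ^ 2 = -1) {a : ℤ} (ha : a % 2 = 0) :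
    ι ^ a = 1 ∨ ι ^ a = -1 := by
  rw [← sq_eq_one_iff, iota_zpow_sq hι, (Int.even_iff.2 ha).neg_one_zpow]

lemma iota_zpow_odd {ι : 𝕜} (hι : ι ^ 2 = -1) {a : ℤ} (ha : a % 2 = 1) :
    ι ^ a = ι ∨ ι ^ a = -ι := by
  rw [← sq_eq_sq_iff_eq_or_eq_neg, iota_zpow_sq hι, (Int.odd_iff.2 ha).neg_one_zpow, hι]

end Component

/-- Proposition (prop: quiver iso)(ii), type D: (a) `π_D` maps every element of
`S₀(D_N^{(1)})` to an element `∼`-equivalent to an element of `S₀(D_N^{(2)})`, and the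
induced map to `∼`-classes is a bijection (injectivity and surjectivity up to `∼`);
(b) `π_D` preserves the multiplicities of roots of the denominators, so it is a quiver
isomorphism `S₀(D_N^{(1)}) ≅ S₀(D_N^{(2)})`. -/
theorem statement5 (𝕜 : Type*) [Field 𝕜] [CharZero 𝕜] (q ι : 𝕜)
    (hq : Transcendental ℚ q) (hι : ι ^ 2 = -1) (N : ℤ) (hN : 4 ≤ N) :
    ((∀ v ∈ S01D q N, ∃ w ∈ S02D q ι N, simD N (piD ι N v) w) ∧
     (∀ v ∈ S01D q N, ∀ w ∈ S01D q N, simD N (piD ι N v) (piD ι N w) → v = w) ∧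
     (∀ w ∈ S02D q ι N, ∃ v ∈ S01D q N, simD N (piD ι N v) w)) ∧
    (∀ v ∈ S01D q N, ∀ w ∈ S01D q N,
      Polynomial.rootMultiplicity (w.2 / v.2) (dD1 q N v.1 w.1) =
        Polynomial.rootMultiplicity ((piD ι N w).2 / (piD ι N v).2)
          (dD2 q N (piD ι N v).1 (piD ι N w).1)) := by
  have hq0 : q ≠ 0 := ne_zero_of_transcendental hq
  have hι0 : ι ≠ 0 := iota_ne_zero hι
  have hQ0 : ∀ p : ℤ, (-q) ^ p ≠ 0 := fun p => zpow_ne_zero _ (neg_ne_zero.2 hq0)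
  have hQe : ∀ p : ℤ, p % 2 = 0 → (-q) ^ p = q ^ p := fun p hp => (Int.even_iff.2 hp).neg_zpow q
  have hQo : ∀ p : ℤ, p % 2 = 1 → (-q) ^ p = -q ^ p := fun p hp => (Int.odd_iff.2 hp).neg_zpow q
  refine ⟨⟨?_, ?_, ?_⟩, ?_⟩
  · intro v hv
    obtain ⟨i, p, rfl, ⟨h1, h2, h3⟩ | ⟨hi, hp⟩⟩ := (mem_S01D hN).1 hv
    · rw [piD_nonspin h2]
      rcases Int.emod_two_eq_zero_or_one p with hp | hp
      · refine ⟨(i, ι * q ^ p), Or.inl (Or.inl ⟨i, p, h1, h2, hp, by omega, rfl⟩), rfl, ?_⟩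
        rw [hQe p hp]
        rcases iota_zpow_odd hι (a := N - i) (by omega) with h | h
        · exact Or.inl (by simp only [h])
        · exact Or.inr ⟨h2, by simp only [h]; ring⟩
      · refine ⟨(i, q ^ p), Or.inl (Or.inr ⟨i, p, h1, h2, hp, by omega, rfl⟩), rfl, ?_⟩
        rw [hQo p hp]
        rcases iota_zpow_even hι (a := N - i) (by omega) with h | h
        · exact Or.inr ⟨h2, by simp only [h]; ring⟩
        · exact Or.inl (by simp only [h]; ring)
    · rw [piD_spin hi, hQe p hp]
      refine ⟨(N - 1, (-1) ^ i * q ^ p), Or.inr ⟨p, (-1) ^ i, ?_, hp, rfl⟩, rfl, Or.inl rfl⟩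
      rcases Int.even_or_odd i with h | h <;> simp [h.neg_one_zpow]
  · intro v hv w hw
    obtain ⟨i, p, rfl, ⟨h1, h2, h3⟩ | ⟨hi, hp⟩⟩ := (mem_S01D hN).1 hv <;>
    obtain ⟨j, r, rfl, ⟨g1, g2, g3⟩ | ⟨hj, hr⟩⟩ := (mem_S01D hN).1 hw
    · rw [piD_nonspin h2, piD_nonspin g2]
      rintro ⟨hij, h⟩
      dsimp only at hij h
      subst hij
      have hpr : p = r := by
        have h' : ((-q) ^ p) ^ 2 = ((-q) ^ r) ^ 2 := by
          have hi0 : ι ^ (N - i) ≠ 0 := zpow_ne_zero _ hι0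
          rcases h with h | ⟨_, h⟩
          · rw [mul_left_cancel₀ hi0 h]
          · rw [← mul_neg] at h
            rw [mul_left_cancel₀ hi0 h, neg_sq]
        rw [← zpow_natCast, ← zpow_natCast, ← zpow_mul, ← zpow_mul, neg_zpow_eq q,
          neg_zpow_eq q, sign_mul_zpow_inj hq] at h'
        push_cast at h'
        omega
      rw [hpr]
    · rw [piD_nonspin h2, piD_spin hj]
      rintro ⟨hij, -⟩
      dsimp only at hij
      omega
    · rw [piD_spin hi, piD_nonspin g2]
      rintro ⟨hij, -⟩
      dsimp only at hij
      omega
    · rw [piD_spin hi, piD_spin hj, hQe p hp, hQe r hr]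
      rintro ⟨-, h | ⟨h, -⟩⟩
      · obtain ⟨h, h'⟩ := (sign_mul_zpow_inj hq).1 h
        rw [h, show i = j by omega]
      · dsimp only at h
        omega
  · rintro w ((⟨i, p, h1, h2, hp, h3, rfl⟩ | ⟨i, p, h1, h2, hp, h3, rfl⟩) | ⟨p, ε, hε, hp, rfl⟩)
    · refine ⟨(i, (-q) ^ p), (mem_S01D hN).2 ⟨i, p, rfl, by omega⟩, ?_⟩
      rw [piD_nonspin h2, hQe p hp]
      refine ⟨rfl, ?_⟩
      rcases iota_zpow_odd hι (a := N - i) (by omega) with h | h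
      · exact Or.inl (by simp only [h])
      · exact Or.inr ⟨h2, by simp only [h]; ring⟩
    · refine ⟨(i, (-q) ^ p), (mem_S01D hN).2 ⟨i, p, rfl, by omega⟩, ?_⟩
      rw [piD_nonspin h2, hQo p hp]
      refine ⟨rfl, ?_⟩
      rcases iota_zpow_even hι (a := N - i) (by omega) with h | h
      · exact Or.inr ⟨h2, by simp only [h]; ring⟩
      · exact Or.inl (by simp only [h]; ring)
    ·
      -- `N - 1` and `N` have opposite parities, so one of them realises the sign `ε`.
      obtain ⟨i, hi, hεi⟩ : ∃ i : ℤ, (i = N - 1 ∨ i = N) ∧ (-1 : 𝕜) ^ i = ε := by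
        rcases Int.even_or_odd N with h | h <;> rcases hε with rfl | rfl
        · exact ⟨N, Or.inr rfl, h.neg_one_zpow⟩
        · exact ⟨N - 1, Or.inl rfl, (h.sub_odd odd_one).neg_one_zpow⟩
        · exact ⟨N - 1, Or.inl rfl, (h.sub_odd odd_one).neg_one_zpow⟩
        · exact ⟨N, Or.inr rfl, h.neg_one_zpow⟩
      refine ⟨(i, (-q) ^ p), (mem_S01D hN).2 ⟨i, p, rfl, by omega⟩, ?_⟩
      rw [piD_spin hi, hQe p hp, hεi]
      exact ⟨rfl, Or.inl rfl⟩
  · intro v hv w hw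
    have hQdiv : ∀ a b : ℤ, (-q) ^ b / (-q) ^ a = (-q) ^ (b - a) := fun a b =>
      (zpow_sub₀ (neg_ne_zero.2 hq0) b a).symm
    have hQsq : ∀ a : ℤ, ((-q) ^ a) ^ 2 = q ^ (2 * a) := fun a => by
      rw [← zpow_natCast, ← zpow_mul, mul_comm, zpow_mul, zpow_mul]
      norm_cast
      rw [neg_sq]
    have hsgn0 : ∀ a : ℤ, (-1 : 𝕜) ^ a ≠ 0 := fun a => zpow_ne_zero _ (by norm_num)
    have hsgn : ∀ a : ℤ, ((-1 : 𝕜) ^ a) ^ 2 = 1 := fun a => by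
      rcases Int.even_or_odd a with h | h <;> simp [h.neg_one_zpow]
    have hi0 : ∀ a : ℤ, ι ^ a ≠ 0 := fun a => zpow_ne_zero _ hι0
    obtain ⟨k, a, rfl, ⟨h1, h2, h3⟩ | ⟨hk, ha⟩⟩ := (mem_S01D hN).1 hv <;>
    obtain ⟨l, b, rfl, ⟨g1, g2, g3⟩ | ⟨hl, hb⟩⟩ := (mem_S01D hN).1 hw
    · rw [piD_nonspin h2, piD_nonspin g2]
      dsimp only
      rw [hQdiv]
      refine mult_nonspin hq h2 g2
        (div_ne_zero (mul_ne_zero (hi0 _) (hQ0 _)) (mul_ne_zero (hi0 _) (hQ0 _))) ?_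
      rw [mul_div_mul_comm, hQdiv, mul_pow, hQsq, div_pow, iota_zpow_sq hι, iota_zpow_sq hι,
        ← zpow_sub₀ (by norm_num : (-1 : 𝕜) ≠ 0)]
      congr 2
      ring
    · rw [piD_nonspin h2, piD_spin hl]
      dsimp only
      rw [hQdiv]
      refine mult_mixed hq (m := k) (by omega) (by omega) (by omega) (by omega) (by omega)
        (by omega) (div_ne_zero (mul_ne_zero (hsgn0 _) (hQ0 _)) (mul_ne_zero (hi0 _) (hQ0 _))) ?_
      rw [mul_div_mul_comm, hQdiv, mul_pow, hQsq, div_pow, iota_zpow_sq hι, hsgn, one_div,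
        ← inv_zpow, inv_neg_one]
    · rw [piD_spin hk, piD_nonspin g2]
      dsimp only
      rw [hQdiv]
      refine mult_mixed hq (m := l) (by omega) (by omega) (by omega) (by omega) (by omega)
        (by omega) (div_ne_zero (mul_ne_zero (hi0 _) (hQ0 _)) (mul_ne_zero (hsgn0 _) (hQ0 _))) ?_
      rw [mul_div_mul_comm, hQdiv, mul_pow, hQsq, div_pow, iota_zpow_sq hι, hsgn, div_one]
    · rw [piD_spin hk, piD_spin hl]
      dsimp only
      rw [hQdiv]
      refine mult_spin hq hk hl (by omega) ?_
      rw [mul_div_mul_comm, hQdiv, ← zpow_sub₀ (by norm_num : (-1 : 𝕜) ≠ 0),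
        hQe (b - a) (by omega)]
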